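/- For all real numbers a, b with 1 < a ≤ b, one has ∫_a^b dt/(√t · (log t)²) = (1/2) ∫_{√a}^{√b} du/log u + √a/log a − √b/log b. -/

import Mathlib

/-!
Since `(t ^ r / log t ^ n)' = r t ^ (r - 1) / log t ^ n - n t ^ (r - 1) / log t ^ (n + 1)`,
integrating over `[a, b]` relates the integrals with consecutive powers of `log t`. For `n = 1` the
substitution `u = t ^ r`, under which `du / log u = t ^ (r - 1) dt / log t`, turns the lower one
into a logarithmic integral. The theorem is the case `r = 1 / 2`.
-/

open Set
open scoped Interval

lemma uIcc_subset_Ioi_diff_one {a b : ℝ} (ha : 0 < a) (hb : 0 < b) (h1 : 1 ∉ [[a, b]]) :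
    [[a, b]] ⊆ Ioi 0 \ {1} :=
  fun _ ht => ⟨(lt_min ha hb).trans_le ht.1, ne_of_mem_of_not_mem ht h1⟩

lemma continuousOn_rpow_div_log_pow (p : ℝ) (n : ℕ) :
    ContinuousOn (fun t : ℝ => t ^ p / Real.log t ^ n) (Ioi 0 \ {1}) := by
  intro t ht
  have ht0 : t ≠ 0 := ht.1.ne'
  exact ((Real.continuousAt_rpow_const t p (.inl ht0)).div ((Real.continuousAt_log ht0).pow n)
    (pow_ne_zero n (Real.log_ne_zero_of_pos_of_ne_one ht.1 ht.2))).continuousWithinAt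

lemma hasDerivAt_rpow_div_log_pow {t : ℝ} (ht : t ∈ Ioi (0 : ℝ) \ {1}) (r : ℝ) (n : ℕ) :
    HasDerivAt (fun t : ℝ => t ^ r / Real.log t ^ n)
      (r * (t ^ (r - 1) / Real.log t ^ n) - n * (t ^ (r - 1) / Real.log t ^ (n + 1))) t := by
  have ht0 : t ≠ 0 := ht.1.ne'
  have hlog : Real.log t ≠ 0 := Real.log_ne_zero_of_pos_of_ne_one ht.1 ht.2
  refine ((Real.hasDerivAt_rpow_const (.inl ht0)).div ((Real.hasDerivAt_log ht0).pow n)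
    (pow_ne_zero n hlog)).congr_deriv ?_
  rw [Real.rpow_sub_one ht0]
  cases n with
  | zero => simp
  | succ n =>
    simp only [Pi.pow_apply, Nat.add_sub_cancel]
    field_simp
    ring

lemma intervalIntegrable_rpow_div_log_pow {a b : ℝ} (ha : 0 < a) (hb : 0 < b) (h1 : 1 ∉ [[a, b]])
    (p : ℝ) (n : ℕ) :
    IntervalIntegrable (fun t : ℝ => t ^ p / Real.log t ^ n) MeasureTheory.volume a b :=
  ((continuousOn_rpow_div_log_pow p n).mono
    (uIcc_subset_Ioi_diff_one ha hb h1)).intervalIntegrable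

lemma natCast_mul_integral_rpow_div_log_pow_succ {a b : ℝ} (ha : 0 < a) (hb : 0 < b)
    (h1 : 1 ∉ [[a, b]]) (r : ℝ) (n : ℕ) :
    n * ∫ t in a..b, t ^ (r - 1) / Real.log t ^ (n + 1) =
      r * (∫ t in a..b, t ^ (r - 1) / Real.log t ^ n)
        + a ^ r / Real.log a ^ n - b ^ r / Real.log b ^ n := by
  have hn := (intervalIntegrable_rpow_div_log_pow ha hb h1 (r - 1) n).const_mul r
  have hsucc := (intervalIntegrable_rpow_div_log_pow ha hb h1 (r - 1) (n + 1)).const_mul (n : ℝ)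
  have hFTC := intervalIntegral.integral_eq_sub_of_hasDerivAt
    (fun t ht => hasDerivAt_rpow_div_log_pow (uIcc_subset_Ioi_diff_one ha hb h1 ht) r n)
    (hn.sub hsucc)
  rw [intervalIntegral.integral_sub hn hsucc, intervalIntegral.integral_const_mul,
    intervalIntegral.integral_const_mul] at hFTC
  linarith

lemma integral_rpow_sub_one_div_log {a b : ℝ} (ha : 0 < a) (hb : 0 < b) (h1 : 1 ∉ [[a, b]])
    {r : ℝ} (hr : r ≠ 0) :
    ∫ t in a..b, t ^ (r - 1) / Real.log t = ∫ u in a ^ r..b ^ r, 1 / Real.log u := by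
  have hsub := uIcc_subset_Ioi_diff_one ha hb h1
  have hderiv : ∀ t ∈ [[a, b]], HasDerivAt (fun t : ℝ => t ^ r) (r * t ^ (r - 1)) t :=
    fun t ht => Real.hasDerivAt_rpow_const (.inl (hsub ht).1.ne')
  have hderiv_cont : ContinuousOn (fun t : ℝ => r * t ^ (r - 1)) [[a, b]] := fun t ht =>
    ((Real.continuousAt_rpow_const t _ (.inl (hsub ht).1.ne')).const_mul r).continuousWithinAt
  have hcont : ContinuousOn (fun u => 1 / Real.log u) ((fun t : ℝ => t ^ r) '' [[a, b]]) := by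
    rintro _ ⟨t, ht, rfl⟩
    have hpos : 0 < t ^ r := Real.rpow_pos_of_pos (hsub ht).1 r
    have hlog : Real.log (t ^ r) ≠ 0 := by
      rw [Real.log_rpow (hsub ht).1]
      exact mul_ne_zero hr (Real.log_ne_zero_of_pos_of_ne_one (hsub ht).1 (hsub ht).2)
    exact (continuousAt_const.div (Real.continuousAt_log hpos.ne') hlog).continuousWithinAt
  rw [← intervalIntegral.integral_comp_mul_deriv' hderiv hderiv_cont hcont]
  refine intervalIntegral.integral_congr fun t ht => ?_
  simp only [Function.comp_apply]
  rw [Real.log_rpow (hsub ht).1]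
  field_simp

lemma integral_rpow_sub_one_div_log_sq {a b : ℝ} (ha : 0 < a) (hb : 0 < b) (h1 : 1 ∉ [[a, b]])
    (r : ℝ) :
    ∫ t in a..b, t ^ (r - 1) / Real.log t ^ 2 =
      r * (∫ u in a ^ r..b ^ r, 1 / Real.log u) + a ^ r / Real.log a - b ^ r / Real.log b := by
  have hrec := natCast_mul_integral_rpow_div_log_pow_succ ha hb h1 r 1
  simp only [Nat.cast_one, one_mul, pow_one, one_add_one_eq_two] at hrec
  rcases eq_or_ne r 0 with rfl | hr
  · simpa only [zero_mul] using hrec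
  · rwa [integral_rpow_sub_one_div_log ha hb h1 hr] at hrec

theorem stmt_3_general {a b : ℝ} (ha : 0 < a) (hb : 0 < b) (h1 : 1 ∉ [[a, b]]) :
    ∫ t in a..b, 1 / (Real.sqrt t * (Real.log t) ^ 2) =
      (1/2) * (∫ u in Real.sqrt a..Real.sqrt b, 1 / Real.log u)
        + Real.sqrt a / Real.log a - Real.sqrt b / Real.log b := by
  simp only [Real.sqrt_eq_rpow]
  rw [← integral_rpow_sub_one_div_log_sq ha hb h1]
  refine intervalIntegral.integral_congr fun t ht => ?_
  have ht0 : 0 < t := (uIcc_subset_Ioi_diff_one ha hb h1 ht).1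
  have hpow : t ^ (1 / 2 - 1 : ℝ) = (t ^ (1 / 2 : ℝ))⁻¹ := by
    rw [← Real.rpow_neg ht0.le]
    norm_num
  simp only [hpow]
  field_simp

theorem stmt_3 (a b : ℝ) (ha : 1 < a) (hab : a ≤ b) :
    ∫ t in a..b, 1 / (Real.sqrt t * (Real.log t) ^ 2) =
      (1/2) * (∫ u in Real.sqrt a..Real.sqrt b, 1 / Real.log u)
        + Real.sqrt a / Real.log a - Real.sqrt b / Real.log b :=
  stmt_3_general (by linarith) (by linarith) (notMem_uIcc_of_lt ha (ha.trans_le hab))
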